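/- Let σ0 > 0, a < b real numbers, n ≥ 1 an integer, φ0 = γ_{0,σ0}, and let λ_n be the unique minimizer over λ ∈ [a,b] of ∫_a^b |t − λ|^n φ0(t) dt. Set C := min_{t∈[a,b]} φ0(t) and D := max_{t∈[a,b]} φ0(t). Then ∫_a^b |t − λ_n|^n φ0(t) dt ≤ ((b−a)^{n+1}/((n+1)·2^{n+1}))·(1 + (D/C)^{(n+1)/n})·D. -/

import Mathlib

/-!
The bound follows from comparing the minimizer with the midpoint `m = (a + b) / 2`, using only
that the density is continuous and positive. By optimality the moment at `lam` is at most the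
moment at `m`, which is at most
`D * ∫ |t - m| ^ n = 2 * D * (b - a) ^ (n + 1) / ((n + 1) * 2 ^ (n + 1))`
(`integral_abs_sub_midpoint_pow`). Since `0 < C ≤ D`, the factor `2` is at most
`1 + (D / C) ^ ((n + 1) / n)`.
-/

open MeasureTheory

/-- Centered Gaussian pdf of standard deviation σ. -/
noncomputable def gaussPdf (σ t : ℝ) : ℝ :=
  (2 * Real.pi * σ ^ 2) ^ (-(1:ℝ) / 2) * Real.exp (-(t ^ 2) / (2 * σ ^ 2))

theorem gaussPdf_continuous (σ : ℝ) : Continuous (gaussPdf σ) := by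
  unfold gaussPdf
  fun_prop

theorem gaussPdf_pos {σ : ℝ} (hσ : 0 < σ) (t : ℝ) : 0 < gaussPdf σ t := by
  unfold gaussPdf
  positivity

theorem integral_abs_sub_midpoint_pow {a b : ℝ} (hab : a < b) (n : ℕ) :
    ∫ t in Set.Icc a b, |t - (a + b) / 2| ^ n =
      2 * ((b - a) ^ (n + 1) / (((n : ℝ) + 1) * 2 ^ (n + 1))) := by
  have h1 : a ≤ (a + b) / 2 := by linarith
  have h2 : (a + b) / 2 ≤ b := by linarith
  have hcont : Continuous fun t : ℝ => |t - (a + b) / 2| ^ n := by fun_prop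
  rw [integral_Icc_eq_integral_Ioc, ← Set.Ioc_union_Ioc_eq_Ioc h1 h2,
    setIntegral_union (Set.Ioc_disjoint_Ioc_of_le le_rfl) measurableSet_Ioc
      (hcont.integrableOn_Ioc) (hcont.integrableOn_Ioc),
    ← Set.uIoc_of_le h2, ← Set.uIoc_of_ge h1, integral_pow_abs_sub_uIoc,
    integral_pow_abs_sub_uIoc]
  have e1 : |a - (a + b) / 2| = (b - a) / 2 := by
    rw [abs_of_nonpos (by linarith)]; ring
  have e2 : |b - (a + b) / 2| = (b - a) / 2 := by
    rw [abs_of_nonneg (by linarith)]; ring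
  rw [e1, e2, div_pow]
  field_simp
  ring

theorem p_moment_upper_bound
    (σ0 : ℝ) (hσ0 : 0 < σ0) (a b : ℝ) (hab : a < b) (n : ℕ) (hn : 1 ≤ n)
    (C D : ℝ)
    (hC : C = sInf (gaussPdf σ0 '' Set.Icc a b))
    (hD : D = sSup (gaussPdf σ0 '' Set.Icc a b))
    (lam : ℝ) (hmem : lam ∈ Set.Icc a b)
    (hopt : ∀ lam' ∈ Set.Icc a b,
      ∫ t in Set.Icc a b, |t - lam| ^ n * gaussPdf σ0 t ≤
        ∫ t in Set.Icc a b, |t - lam'| ^ n * gaussPdf σ0 t) :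
    ∫ t in Set.Icc a b, |t - lam| ^ n * gaussPdf σ0 t ≤
      ((b - a) ^ (n + 1) / (((n : ℝ) + 1) * 2 ^ (n + 1))) *
        (1 + (D / C) ^ (((n : ℝ) + 1) / (n : ℝ))) * D := by
  have hcont := gaussPdf_continuous σ0
  have hcpt : IsCompact (gaussPdf σ0 '' Set.Icc a b) := isCompact_Icc.image hcont
  have hne : (gaussPdf σ0 '' Set.Icc a b).Nonempty := (Set.nonempty_Icc.2 hab.le).image _
  have hle : ∀ t ∈ Set.Icc a b, gaussPdf σ0 t ≤ D := fun t ht => by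
    rw [hD]
    exact le_csSup hcpt.bddAbove (Set.mem_image_of_mem _ ht)
  -- The infimum is attained, hence is a value of the positive density.
  obtain ⟨c, hc, hcC⟩ : C ∈ gaussPdf σ0 '' Set.Icc a b := hC ▸ hcpt.sInf_mem hne
  have hC0 : 0 < C := hcC ▸ gaussPdf_pos hσ0 c
  have hCD : C ≤ D := hcC ▸ hle c hc
  have hD0 : 0 < D := hC0.trans_le hCD
  have hratio : 1 ≤ (D / C) ^ (((n : ℝ) + 1) / (n : ℝ)) :=
    Real.one_le_rpow ((one_le_div hC0).2 hCD) (by positivity)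
  have hm : (a + b) / 2 ∈ Set.Icc a b := ⟨by linarith, by linarith⟩
  have hba : 0 < b - a := sub_pos.2 hab
  calc ∫ t in Set.Icc a b, |t - lam| ^ n * gaussPdf σ0 t
      ≤ ∫ t in Set.Icc a b, |t - (a + b) / 2| ^ n * gaussPdf σ0 t := hopt _ hm
    _ ≤ ∫ t in Set.Icc a b, |t - (a + b) / 2| ^ n * D := by
        refine setIntegral_mono_on (Continuous.integrableOn_Icc (by fun_prop))
          (Continuous.integrableOn_Icc (by fun_prop)) measurableSet_Icc fun t ht => ?_
        exact mul_le_mul_of_nonneg_left (hle t ht) (by positivity)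
    _ = ((b - a) ^ (n + 1) / (((n : ℝ) + 1) * 2 ^ (n + 1))) * 2 * D := by
        rw [integral_mul_const, integral_abs_sub_midpoint_pow hab]
        ring
    _ ≤ _ := by
        gcongr
        linarith
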